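/- Let f ∈ ℱ. (i) For every ⟨s_k : 1 ≤ k < ω⟩ ∈ lim(𝒮_f) there exists η ∈ lim(𝒯_f) such that η↾k ∈ s_k for all k ≥ 1. (ii) Conversely, for every η ∈ lim(𝒯_f) there exists ⟨s_k : 1 ≤ k < ω⟩ ∈ lim(𝒮_f) such that η↾k ∈ s_k for all k ≥ 1. -/

import Mathlib

/-- `η ∈ 𝒯_f` : a finite sequence with `η(ℓ) ≤ f(ℓ)` for all `ℓ < lg(η)`. -/
def inT (f : ℕ → ℕ) (η : List ℕ) : Prop := ∀ i : Fin η.length, η.get i ≤ f i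

/-- `𝒯_{f,k}` : elements of `𝒯_f` of length exactly `k`. -/
def Tk (f : ℕ → ℕ) (k : ℕ) : Set (List ℕ) := {η | η.length = k ∧ inT f η}

/-- `𝒯_{f,[k]}` : elements of `𝒯_f` of length at most `k`. -/
def Tle (f : ℕ → ℕ) (k : ℕ) : Set (List ℕ) := {η | η.length ≤ k ∧ inT f η}

/-- `𝒯_f = ⋃_k 𝒯_{f,k}`. -/
def Tf (f : ℕ → ℕ) : Set (List ℕ) := {η | inT f η}

/-- The conditions on `s ⊆ 𝒯_{f,[k]}` prior to maximality: nonempty, closed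
under initial segment, every `⊴`-maximal node is in `𝒯_{f,k}`, and `s`
contains no full splitting `{ρ⌢⟨ℓ⟩ : ℓ ≤ f(lg ρ)}`. -/
def SBase (f : ℕ → ℕ) (k : ℕ) (s : Set (List ℕ)) : Prop :=
  s ⊆ Tle f k ∧ s.Nonempty ∧
  (∀ η ∈ s, ∀ ρ : List ℕ, ρ <+: η → ρ ∈ s) ∧
  (∀ ρ ∈ s, (∀ η ∈ s, ρ <+: η → η = ρ) → ρ.length = k) ∧
  (∀ ρ ∈ Tle f k, ¬ ∀ ℓ ≤ f ρ.length, ρ ++ [ℓ] ∈ s)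

/-- `𝒮_{f,k}` : the `k`-maximal subsets of `𝒯_{f,[k]}`, i.e. those satisfying
`SBase` and maximal under inclusion subject to it. -/
def Sk (f : ℕ → ℕ) (k : ℕ) : Set (Set (List ℕ)) :=
  {s | SBase f k s ∧ ∀ s', SBase f k s' → s ⊆ s' → s' = s}

/-- `𝒮_f = ⋃_{k ≥ 1} 𝒮_{f,k}`. -/
def Sf (f : ℕ → ℕ) : Set (Set (List ℕ)) := {s | ∃ k, 1 ≤ k ∧ s ∈ Sk f k}

/-- The restriction `η ↾ k = ⟨η 0, …, η (k-1)⟩` of `η : ℕ → ℕ`. -/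
def restr (η : ℕ → ℕ) (k : ℕ) : List ℕ := List.map η (List.range k)

/-- `lim(𝒯_f)` : branches of `𝒯_f`. -/
def limT (f : ℕ → ℕ) : Set (ℕ → ℕ) := {η | ∀ k, restr η k ∈ Tk f k}

/-- `lim(𝒮_f)` : sequences `⟨s_k : 1 ≤ k < ω⟩` with `s_k ∈ 𝒮_{f,k}`,
increasing under inclusion (the value at `0` is irrelevant). -/
def limS (f : ℕ → ℕ) : Set (ℕ → Set (List ℕ)) :=
  {ν | (∀ k, 1 ≤ k → ν k ∈ Sk f k) ∧ ∀ k k', 1 ≤ k → k < k' → ν k ⊆ ν k'}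

/-!
In a `k`-maximal tree every node of length less than `k` has a successor, so in an increasing
sequence of such trees a branch can be climbed one level at a time, the node of length `k` being
found in `s_k`. Conversely, deleting exactly one successor at every node of `𝒯_f` leaves a tree
whose truncations are all maximal: putting a deleted successor back would complete a full
splitting. Since every node has at least two successors, the deletion can be arranged to spare a
given branch.
-/

theorem exists_le_ne {n : ℕ} (hn : 0 < n) (m : ℕ) : ∃ a ≤ n, a ≠ m := by
  rcases eq_or_ne m 0 with rfl | hm
  · exact ⟨1, hn, one_ne_zero⟩
  · exact ⟨0, hn.le, hm.symm⟩

theorem restr_succ (η : ℕ → ℕ) (k : ℕ) : restr η (k + 1) = restr η k ++ [η k] := by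
  simp [restr, List.range_succ]

theorem length_restr (η : ℕ → ℕ) (k : ℕ) : (restr η k).length = k := by
  simp [restr]

theorem exists_forall_restr_of_exists_append {P : List ℕ → Prop} (nil : P [])
    (exists_append : ∀ ρ, P ρ → ∃ a, P (ρ ++ [a])) : ∃ η : ℕ → ℕ, ∀ k, P (restr η k) := by
  choose! next P_append_next using exists_append
  let path (n : ℕ) : List ℕ := (fun ρ => ρ ++ [next ρ])^[n] []
  have path_succ (n : ℕ) : path (n + 1) = path n ++ [next (path n)] :=
    Function.iterate_succ_apply' ..
  have P_path (n : ℕ) : P (path n) := by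
    induction n with
    | zero => exact nil
    | succ n ih => exact path_succ n ▸ P_append_next _ ih
  have restr_eq_path (k : ℕ) : restr (fun n => next (path n)) k = path k := by
    induction k with
    | zero => rfl
    | succ k ih => rw [restr_succ, ih, path_succ]
  exact ⟨fun n => next (path n), fun k => restr_eq_path k ▸ P_path k⟩

section Trees

variable {f η : ℕ → ℕ} {g : List ℕ → ℕ} {k m a : ℕ} {ρ σ : List ℕ} {s : Set (List ℕ)}

theorem inT_append_singleton : inT f (ρ ++ [a]) ↔ inT f ρ ∧ a ≤ f ρ.length := by
  simp only [inT, Fin.forall_iff, List.get_eq_getElem, List.length_append, List.length_singleton,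
    Nat.forall_lt_succ_right', List.getElem_concat_length]
  refine and_congr_left fun _ => forall₂_congr fun i hi => ?_
  rw [List.getElem_append_left hi]

theorem inT.of_prefix (h : inT f ρ) (hσ : σ <+: ρ) : inT f σ := fun i => by
  simpa only [List.get_eq_getElem, hσ.getElem i.isLt] using h ⟨i, i.isLt.trans_le hσ.length_le⟩

theorem nil_mem_Tle : [] ∈ Tle f k :=
  ⟨Nat.zero_le k, fun i => i.elim0⟩

theorem append_singleton_mem_Tle :
    ρ ++ [a] ∈ Tle f k ↔ inT f ρ ∧ ρ.length < k ∧ a ≤ f ρ.length := by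
  simp only [Tle, Set.mem_ofPred_eq, List.length_append, List.length_singleton,
    Nat.succ_le_iff, inT_append_singleton, and_left_comm]

theorem mem_Tle_of_prefix (h : ρ ∈ Tle f k) (hσ : σ <+: ρ) : σ ∈ Tle f k :=
  ⟨hσ.length_le.trans h.1, h.2.of_prefix hσ⟩

theorem Tle_mono (h : k ≤ m) : Tle f k ⊆ Tle f m :=
  fun _ hρ => ⟨hρ.1.trans h, hρ.2⟩

theorem SBase.nil_mem (hs : SBase f k s) : [] ∈ s := by
  obtain ⟨-, ⟨ρ, hρ⟩, prefix_mem, -⟩ := hs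
  exact prefix_mem ρ hρ [] List.nil_prefix

theorem SBase.exists_append_mem (hs : SBase f k s) (hρ : ρ ∈ s) (hlen : ρ.length < k) :
    ∃ a, ρ ++ [a] ∈ s := by
  obtain ⟨-, -, prefix_mem, length_of_maximal, -⟩ := hs
  have not_maximal : ¬ ∀ σ ∈ s, ρ <+: σ → σ = ρ :=
    fun h => hlen.ne (length_of_maximal ρ hρ h)
  push Not at not_maximal
  obtain ⟨_, hσ, ⟨τ, rfl⟩, hne⟩ := not_maximal
  cases τ with
  | nil => exact absurd (List.append_nil ρ) hne
  | cons a τ => exact ⟨a, prefix_mem _ hσ _ ⟨τ, (List.append_cons ρ a τ).symm⟩⟩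

theorem exists_mem_limT_of_SBase {ν : ℕ → Set (List ℕ)} (base : ∀ k, 1 ≤ k → SBase f k (ν k))
    (mono : ∀ k k', 1 ≤ k → k < k' → ν k ⊆ ν k') :
    ∃ η ∈ limT f, ∀ k, 1 ≤ k → restr η k ∈ ν k := by
  -- `ν 0` is arbitrary, so the root is placed in `ν 1`.
  let P (ρ : List ℕ) : Prop := ρ ∈ ν (max 1 ρ.length)
  have P_append : ∀ ρ, P ρ → ∃ a, P (ρ ++ [a]) := by
    intro ρ hρ
    have mem_succ : ρ ∈ ν (ρ.length + 1) := by
      rcases ρ.length.eq_zero_or_pos with h | h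
      · simpa [P, h] using hρ
      · have mem_length : ρ ∈ ν ρ.length := by
          simpa only [P, max_eq_right (Nat.succ_le_of_lt h)] using hρ
        exact mono _ _ h (Nat.lt_succ_self _) mem_length
    simpa [P] using (base _ (Nat.succ_pos _)).exists_append_mem mem_succ (Nat.lt_succ_self _)
  obtain ⟨η, hη⟩ := exists_forall_restr_of_exists_append (P := P) (base 1 le_rfl).nil_mem P_append
  simp only [P, length_restr] at hη
  refine ⟨η, fun k => ⟨length_restr η k, ?_⟩, fun k hk => ?_⟩
  · exact ((base _ (le_max_left 1 k)).1 (hη k)).2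
  · simpa only [max_eq_right hk] using hη k

/-- The subtree of `𝒯_{f,[k]}` obtained by deleting, at every node `σ`, the successor `σ⌢⟨g σ⟩`
together with everything above it. -/
def prunedTree (f : ℕ → ℕ) (g : List ℕ → ℕ) (k : ℕ) : Set (List ℕ) :=
  {ρ ∈ Tle f k | ∀ σ, ¬ σ ++ [g σ] <+: ρ}

theorem nil_mem_prunedTree : [] ∈ prunedTree f g k :=
  ⟨nil_mem_Tle, by simp⟩

theorem append_singleton_mem_prunedTree : ρ ++ [a] ∈ prunedTree f g k ↔
    ρ ∈ prunedTree f g k ∧ ρ.length < k ∧ a ≤ f ρ.length ∧ a ≠ g ρ := by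
  constructor
  · rintro ⟨append_mem, avoids⟩
    obtain ⟨hρ, hlen, ha⟩ := append_singleton_mem_Tle.1 append_mem
    refine ⟨⟨⟨hlen.le, hρ⟩, fun σ hσ => avoids σ (hσ.trans (List.prefix_append ρ [a]))⟩,
      hlen, ha, ?_⟩
    rintro rfl
    exact avoids ρ List.prefix_rfl
  · rintro ⟨⟨hρ, avoids⟩, hlen, ha, hne⟩
    refine ⟨append_singleton_mem_Tle.2 ⟨hρ.2, hlen, ha⟩, fun σ hσ => ?_⟩
    rcases List.prefix_concat_iff.1 hσ with heq | hσρ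
    · obtain ⟨rfl, hag⟩ := List.append_inj' heq rfl
      exact hne (List.singleton_inj.1 hag).symm
    · exact avoids σ hσρ

theorem prunedTree_mono (h : k ≤ m) : prunedTree f g k ⊆ prunedTree f g m :=
  fun _ hρ => ⟨Tle_mono h hρ.1, hρ.2⟩

theorem SBase_prunedTree (hf : ∀ i, 0 < f i) (hg : ∀ σ, g σ ≤ f σ.length) :
    SBase f k (prunedTree f g k) := by
  refine ⟨fun ρ hρ => hρ.1, ⟨[], nil_mem_prunedTree⟩, ?_, ?_, ?_⟩
  · exact fun ρ hρ σ hσ => ⟨mem_Tle_of_prefix hρ.1 hσ, fun τ hτ => hρ.2 τ (hτ.trans hσ)⟩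
  · intro ρ hρ maximal
    by_contra hlen
    obtain ⟨a, ha, hne⟩ := exists_le_ne (hf ρ.length) (g ρ)
    have append_mem : ρ ++ [a] ∈ prunedTree f g k :=
      append_singleton_mem_prunedTree.2 ⟨hρ, lt_of_le_of_ne hρ.1.1 hlen, ha, hne⟩
    simpa using maximal _ append_mem (List.prefix_append ρ [a])
  · intro ρ _ full
    exact (full (g ρ) (hg ρ)).2 ρ List.prefix_rfl

theorem SBase.subset_prunedTree (hs : SBase f k s) (hsub : prunedTree f g k ⊆ s) :
    s ⊆ prunedTree f g k := by
  obtain ⟨subset_Tle, -, prefix_mem, -, not_full⟩ := hs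
  intro ρ
  induction ρ using List.reverseRecOn with
  | nil => exact fun _ => nil_mem_prunedTree
  | append_singleton ρ a ih =>
    intro append_mem
    have hρ : ρ ∈ s := prefix_mem _ append_mem ρ (List.prefix_append ρ [a])
    obtain ⟨-, hlen, ha⟩ := append_singleton_mem_Tle.1 (subset_Tle append_mem)
    refine append_singleton_mem_prunedTree.2 ⟨ih hρ, hlen, ha, ?_⟩
    rintro rfl
    refine not_full ρ (subset_Tle hρ) fun b hb => ?_
    rcases eq_or_ne b (g ρ) with rfl | hne
    · exact append_mem
    · exact hsub (append_singleton_mem_prunedTree.2 ⟨ih hρ, hlen, hb, hne⟩)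

theorem prunedTree_mem_Sk (hf : ∀ i, 0 < f i) (hg : ∀ σ, g σ ≤ f σ.length) :
    prunedTree f g k ∈ Sk f k :=
  ⟨SBase_prunedTree hf hg, fun _ hs hsub => (hs.subset_prunedTree hsub).antisymm hsub⟩

theorem prunedTree_mem_limS (hf : ∀ i, 0 < f i) (hg : ∀ σ, g σ ≤ f σ.length) :
    prunedTree f g ∈ limS f :=
  ⟨fun _ _ => prunedTree_mem_Sk hf hg, fun _ _ _ h => prunedTree_mono h.le⟩

theorem restr_mem_prunedTree (hη : η ∈ limT f) (hne : ∀ i, g (restr η i) ≠ η i) :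
    restr η k ∈ prunedTree f g k := by
  induction k with
  | zero => exact nil_mem_prunedTree
  | succ k ih =>
    have inT_succ : inT f (restr η k ++ [η k]) := restr_succ η k ▸ (hη (k + 1)).2
    rw [restr_succ, append_singleton_mem_prunedTree, length_restr]
    refine ⟨prunedTree_mono k.le_succ ih, k.lt_succ_self, ?_, (hne k).symm⟩
    simpa only [length_restr] using (inT_append_singleton.1 inT_succ).2

theorem exists_mem_limS_of_mem_limT (hf : ∀ i, 0 < f i) (hη : η ∈ limT f) :
    ∃ ν ∈ limS f, ∀ k, 1 ≤ k → restr η k ∈ ν k := by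
  choose g hg_le hg_ne using fun σ : List ℕ => exists_le_ne (hf σ.length) (η σ.length)
  refine ⟨prunedTree f g, prunedTree_mem_limS hf hg_le, fun k _ => restr_mem_prunedTree hη ?_⟩
  exact fun i => by simpa only [length_restr] using hg_ne (restr η i)

end Trees

theorem limS_limT_correspondence_general (f : ℕ → ℕ) (hf0 : ∀ k, 0 < f k) :
    (∀ ν ∈ limS f, ∃ η ∈ limT f, ∀ k, 1 ≤ k → restr η k ∈ ν k) ∧
    (∀ η ∈ limT f, ∃ ν ∈ limS f, ∀ k, 1 ≤ k → restr η k ∈ ν k) :=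
  ⟨fun _ hν => exists_mem_limT_of_SBase (fun k hk => (hν.1 k hk).1) hν.2,
    fun _ => exists_mem_limS_of_mem_limT hf0⟩

/-- For `f ∈ ℱ`: (i) every branch `⟨s_k : 1 ≤ k < ω⟩ ∈ lim(𝒮_f)` admits a
branch `η ∈ lim(𝒯_f)` with `η↾k ∈ s_k` for all `k ≥ 1`; (ii) conversely every
`η ∈ lim(𝒯_f)` admits a branch of `𝒮_f` with `η↾k ∈ s_k` for all `k ≥ 1`. -/
theorem limS_limT_correspondence
    (f : ℕ → ℕ) (hf : StrictMono f) (hf0 : ∀ k, 0 < f k) :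
    (∀ ν ∈ limS f, ∃ η ∈ limT f, ∀ k, 1 ≤ k → restr η k ∈ ν k) ∧
    (∀ η ∈ limT f, ∃ ν ∈ limS f, ∀ k, 1 ≤ k → restr η k ∈ ν k) :=
  limS_limT_correspondence_general f hf0
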